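/- arXiv:1803.05047 — 2 statements merged into one kernel-verified Lean document; each statement's English description precedes it below -/
import Mathlib

section
/- For every diagonal 3×3 unitary matrix D, the adjoint representation D̂ is symplectic: D̂ᵀ·Ω·D̂ = Ω, where Ω is the 8×8 block matrix [[0, I₄],[−I₄, 0]]. -/
open Matrix Complex

noncomputable section

/-- ω = exp(2πi/3), a primitive third root of unity. -/
def ω : ℂ := exp (2 * Real.pi * I / 3)

/-- ζ = exp(2πi/9), a primitive ninth root of unity. -/
def ζ : ℂ := exp (2 * Real.pi * I / 9)

/-- The qutrit Pauli X matrix. -/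
def Xmat : Matrix (Fin 3) (Fin 3) ℂ := !![0,0,1; 1,0,0; 0,1,0]

/-- The qutrit Pauli Z matrix. -/
def Zmat : Matrix (Fin 3) (Fin 3) ℂ := !![1,0,0; 0,ω,0; 0,0,ω^2]

/-- The qutrit Hadamard matrix H = (1/(i√3))·[[1,1,1],[1,ω,ω²],[1,ω²,ω]]. -/
def Hmat : Matrix (Fin 3) (Fin 3) ℂ :=
  (I * (Real.sqrt 3 : ℂ))⁻¹ • !![1,1,1; 1,ω,ω^2; 1,ω^2,ω]

/-- The qutrit phase matrix S = ζ⁸·diag(1,1,ω). -/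
def Smat : Matrix (Fin 3) (Fin 3) ℂ := ζ^8 • !![1,0,0; 0,1,0; 0,0,ω]

/-- The qutrit T matrix T = diag(1,ζ,ζ⁸). -/
def Tmat : Matrix (Fin 3) (Fin 3) ℂ := !![1,0,0; 0,ζ,0; 0,0,ζ^8]

lemma omega_ne_zero : ω ≠ 0 := Complex.exp_ne_zero _
lemma zeta_ne_zero : ζ ≠ 0 := Complex.exp_ne_zero _

lemma omega_im_pos : 0 < ω.im := by
  have h : ω = Complex.exp ((2 * Real.pi / 3 : ℝ) * I) := by
    rw [ω]; push_cast; ring_nf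
  rw [h, Complex.exp_ofReal_mul_I_im]
  apply Real.sin_pos_of_pos_of_lt_pi
  · positivity
  · nlinarith [Real.pi_pos]

lemma omega_ne_one : ω ≠ 1 := by
  intro h
  have := omega_im_pos
  rw [h] at this
  simp at this

lemma omega_cube : ω ^ 3 = 1 := by
  rw [ω, ← Complex.exp_nat_mul]
  rw [show (3:ℕ) * (2 * Real.pi * I / 3) = 2 * Real.pi * I by push_cast; ring]
  exact Complex.exp_two_pi_mul_I

lemma detX : Xmat.det ≠ 0 := by
  simp [Xmat, Matrix.det_fin_three]

lemma detZ : Zmat.det ≠ 0 := by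
  simp [Zmat, Matrix.det_fin_three, omega_ne_zero]

lemma detS : Smat.det ≠ 0 := by
  simp [Smat, Matrix.det_fin_three, omega_ne_zero, zeta_ne_zero]

lemma detT : Tmat.det ≠ 0 := by
  simp [Tmat, Matrix.det_fin_three, zeta_ne_zero]

lemma detH : Hmat.det ≠ 0 := by
  rw [Hmat, Matrix.det_smul]
  apply mul_ne_zero
  · apply pow_ne_zero
    apply inv_ne_zero
    apply mul_ne_zero Complex.I_ne_zero
    simp [Complex.ofReal_ne_zero]
  · rw [Matrix.det_fin_three]
    simp [Matrix.vecHead, Matrix.vecTail]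
    intro h
    have h3 : ω ^ 3 = 1 := omega_cube
    have key : 3 * ω * (ω - 1) = 0 := by linear_combination h + ω * h3
    rcases mul_eq_zero.mp key with h' | h'
    · rcases mul_eq_zero.mp h' with h'' | h''
      · norm_num at h''
      · exact omega_ne_zero h''
    · exact omega_ne_one (by linear_combination h')

/-- X as an element of GL(3, ℂ). -/
def Xg : GL (Fin 3) ℂ := Matrix.GeneralLinearGroup.mkOfDetNeZero Xmat detX

/-- Z as an element of GL(3, ℂ). -/
def Zg : GL (Fin 3) ℂ := Matrix.GeneralLinearGroup.mkOfDetNeZero Zmat detZ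

/-- H as an element of GL(3, ℂ). -/
def Hg : GL (Fin 3) ℂ := Matrix.GeneralLinearGroup.mkOfDetNeZero Hmat detH

/-- S as an element of GL(3, ℂ). -/
def Sg : GL (Fin 3) ℂ := Matrix.GeneralLinearGroup.mkOfDetNeZero Smat detS

/-- T as an element of GL(3, ℂ). -/
def Tg : GL (Fin 3) ℂ := Matrix.GeneralLinearGroup.mkOfDetNeZero Tmat detT

/-- The Clifford group 𝒞: the subgroup of GL(3,ℂ) generated by H and S. -/
def Cliff : Subgroup (GL (Fin 3) ℂ) := Subgroup.closure {Hg, Sg}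

/-- The Clifford+T group: the subgroup of GL(3,ℂ) generated by H, S and T. -/
def CliffT : Subgroup (GL (Fin 3) ℂ) := Subgroup.closure {Hg, Sg, Tg}

/-- The subgroup 𝒮 of GL(3,ℂ) generated by S and X. -/
def Sgrp : Subgroup (GL (Fin 3) ℂ) := Subgroup.closure {Sg, Xg}

/-- Letters of words over the alphabet {H, S, T}. -/
inductive Letter : Type
  | H : Letter
  | S : Letter
  | T : Letter
  deriving DecidableEq

/-- The gate associated to a letter. -/
def Letter.g : Letter → GL (Fin 3) ℂ
  | .H => Hg
  | .S => Sg
  | .T => Tg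

/-- The product of the letters of a word. -/
def wordProd (w : List Letter) : GL (Fin 3) ℂ := (w.map Letter.g).prod

/-- The allowed prefixes of a canonical form: ε, T, H²T. -/
def Prefixes : Set (List Letter) := {[], [.T], [.H, .H, .T]}

/-- The allowed syllables of a canonical form: HT, H³T, SHT, SH³T, S²HT, S²H³T. -/
def Syllables : Set (List Letter) :=
  {[.H, .T], [.H, .H, .H, .T], [.S, .H, .T],
   [.S, .H, .H, .H, .T], [.S, .S, .H, .T], [.S, .S, .H, .H, .H, .T]}

/-- The T-count of a canonical form with prefix `p` and syllable list `ss`: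
`k` if the prefix is empty and `k+1` otherwise, where `k` is the number of syllables. -/
def TCount (p : List Letter) (ss : List (List Letter)) : ℕ :=
  ss.length + (if p = [] then 0 else 1)

/-- P₊ = (P + P²)/√6. -/
def Pplus (P : Matrix (Fin 3) (Fin 3) ℂ) : Matrix (Fin 3) (Fin 3) ℂ :=
  ((Real.sqrt 6 : ℂ))⁻¹ • (P + P ^ 2)

/-- P₋ = i(P − P²)/√6. -/
def Pminus (P : Matrix (Fin 3) (Fin 3) ℂ) : Matrix (Fin 3) (Fin 3) ℂ :=
  (I * ((Real.sqrt 6 : ℂ))⁻¹) • (P - P ^ 2)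

/-- The ordered tuple (Q₁, …, Q₈) = (Z₊, X₊, (XZ)₊, (XZ²)₊, Z₋, X₋, (XZ)₋, (XZ²)₋). -/
def Q : Fin 8 → Matrix (Fin 3) (Fin 3) ℂ :=
  ![Pplus Zmat, Pplus Xmat, Pplus (Xmat * Zmat), Pplus (Xmat * Zmat ^ 2),
    Pminus Zmat, Pminus Xmat, Pminus (Xmat * Zmat), Pminus (Xmat * Zmat ^ 2)]

/-- The adjoint representation Û of U, the 8×8 real matrix with
entries Û_{ij} = tr(Qᵢ U Qⱼ U†). -/
def adj (U : Matrix (Fin 3) (Fin 3) ℂ) : Matrix (Fin 8) (Fin 8) ℝ :=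
  Matrix.of fun i j => (Matrix.trace (Q i * U * Q j * Uᴴ)).re

/-- The top-left 4×4 quadrant Û₊₊. -/
def blockPP (A : Matrix (Fin 8) (Fin 8) ℝ) : Matrix (Fin 4) (Fin 4) ℝ :=
  Matrix.of fun i j => A ⟨i.val, by omega⟩ ⟨j.val, by omega⟩

/-- The top-right 4×4 quadrant Û₊₋. -/
def blockPM (A : Matrix (Fin 8) (Fin 8) ℝ) : Matrix (Fin 4) (Fin 4) ℝ :=
  Matrix.of fun i j => A ⟨i.val, by omega⟩ ⟨j.val + 4, by omega⟩

/-- The bottom-left 4×4 quadrant Û₋₊. -/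
def blockMP (A : Matrix (Fin 8) (Fin 8) ℝ) : Matrix (Fin 4) (Fin 4) ℝ :=
  Matrix.of fun i j => A ⟨i.val + 4, by omega⟩ ⟨j.val, by omega⟩

/-- The bottom-right 4×4 quadrant Û₋₋. -/
def blockMM (A : Matrix (Fin 8) (Fin 8) ℝ) : Matrix (Fin 4) (Fin 4) ℝ :=
  Matrix.of fun i j => A ⟨i.val + 4, by omega⟩ ⟨j.val + 4, by omega⟩

/-- α = sin(2π/9). -/
def αR : ℝ := Real.sin (2 * Real.pi / 9)

/-- The ring ℤ[α]: the subring of ℝ generated by 1/2 and α. -/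
def Zα : Subring ℝ := Subring.closure {1/2, αR}

/-- The ring ℤ[1/2, 1/α]: the subring of ℝ generated by 1/2, α and α⁻¹. -/
def Zhα : Subring ℝ := Subring.closure {1/2, αR, αR⁻¹}

lemma alpha_mem_Zα : αR ∈ Zα := Subring.subset_closure (by simp)

/-- The 8×8 symplectic form Ω = [[0, I₄],[−I₄, 0]]. -/
def Ωm : Matrix (Fin 8) (Fin 8) ℝ :=
  Matrix.of fun i j =>
    if i.val + 4 = j.val then 1 else if j.val + 4 = i.val then -1 else 0

/-- The entries of the unitary conjugate of `A` by a diagonal matrix. -/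
lemma conj_entry (D A : Matrix (Fin 3) (Fin 3) ℂ) (hdiag : D.IsDiag) (i j : Fin 3) :
    (D * A * Dᴴ) i j = D i i * A i j * star (D j j) := by
  rw [← hdiag.diagonal_diag]
  simp [Matrix.diagonal_conjTranspose, Matrix.mul_diagonal, Matrix.diagonal_mul]

lemma diag_norm (D : Matrix (Fin 3) (Fin 3) ℂ) (hD : D ∈ Matrix.unitaryGroup (Fin 3) ℂ)
    (hdiag : D.IsDiag) (i : Fin 3) : (D i i).re ^ 2 + (D i i).im ^ 2 = 1 := by
  have h := Matrix.mem_unitaryGroup_iff.mp hD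
  have h2 := conj_entry D 1 hdiag i i
  rw [mul_one] at h2
  rw [star_eq_conjTranspose] at h
  rw [h] at h2
  have := congrArg Complex.re h2
  simp at this
  linarith

lemma omega_eq : ω = ⟨-1/2, Real.sqrt 3 / 2⟩ := by
  have h : ω = Complex.exp ((2 * Real.pi / 3 : ℝ) * I) := by
    rw [ω]; push_cast; ring_nf
  have e : 2 * Real.pi / 3 = Real.pi - Real.pi / 3 := by ring
  apply Complex.ext
  · rw [h, Complex.exp_ofReal_mul_I_re, e, Real.cos_pi_sub, Real.cos_pi_div_three]; norm_num
  · rw [h, Complex.exp_ofReal_mul_I_im, e, Real.sin_pi_sub, Real.sin_pi_div_three]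

lemma omega_sq_eq : ω ^ 2 = ⟨-1/2, -(Real.sqrt 3 / 2)⟩ := by
  have h3 : Real.sqrt 3 * Real.sqrt 3 = 3 := Real.mul_self_sqrt (by norm_num)
  rw [omega_eq, sq]
  apply Complex.ext
  · simp; linear_combination (-1/4) * h3
  · simp; ring

/-- Common shape of the off-diagonal matrices. -/
def offd (a b c x y z : ℂ) : Matrix (Fin 3) (Fin 3) ℂ := !![0, x, c; a, 0, y; z, b, 0]

def Qx : Fin 8 → Matrix (Fin 3) (Fin 3) ℂ :=
  ![!![2, 0, 0; 0, -1, 0; 0, 0, -1],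
    offd 1 1 1 1 1 1,
    offd 1 ω (ω^2) 1 (ω^2) ω,
    offd 1 (ω^2) ω 1 ω (ω^2),
    !![0, 0, 0; 0, -(Real.sqrt 3 : ℂ), 0; 0, 0, (Real.sqrt 3 : ℂ)],
    I • offd 1 1 1 (-1) (-1) (-1),
    I • offd 1 ω (ω^2) (-1) (-ω^2) (-ω),
    I • offd 1 (ω^2) ω (-1) (-ω) (-ω^2)]

lemma Q_eq (i : Fin 8) : Q i = ((Real.sqrt 6 : ℂ))⁻¹ • Qx i := by
  have w3 := omega_cube
  have w4 : ω ^ 4 = ω := by linear_combination ω * w3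
  have w6 : ω ^ 6 = 1 := by linear_combination (ω^3 + 1) * w3
  have ws : 1 + ω + ω ^ 2 = 0 := by
    rw [omega_sq_eq, omega_eq]; apply Complex.ext <;> simp <;> norm_num
  have wd : I * (ω - ω ^ 2) = -(Real.sqrt 3 : ℂ) := by
    rw [omega_sq_eq, omega_eq]; apply Complex.ext <;> simp
  have hw : ω * ω^2 = 1 := by linear_combination w3
  have hZ2 : Zmat ^ 2 = !![1, 0, 0; 0, ω^2, 0; 0, 0, ω] := by
    rw [pow_two, Zmat, ← w4]
    ext a b
    fin_cases a <;> fin_cases b <;> simp [Matrix.mul_apply, Fin.sum_univ_three] <;> grind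
  have hX2 : Xmat ^ 2 = !![0, 1, 0; 0, 0, 1; 1, 0, 0] := by
    rw [pow_two, Xmat]
    ext a b
    fin_cases a <;> fin_cases b <;> simp [Matrix.mul_apply, Fin.sum_univ_three]
  have hY : Xmat * Zmat = !![0, 0, ω^2; 1, 0, 0; 0, ω, 0] := by
    rw [Xmat, Zmat]
    ext a b
    fin_cases a <;> fin_cases b <;> simp [Matrix.mul_apply, Fin.sum_univ_three]
  have hW : Xmat * Zmat ^ 2 = !![0, 0, ω; 1, 0, 0; 0, ω^2, 0] := by
    rw [hZ2, Xmat]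
    ext a b
    fin_cases a <;> fin_cases b <;> simp [Matrix.mul_apply, Fin.sum_univ_three]
  have hY2 : (Xmat * Zmat) ^ 2 = !![0, 1, 0; 0, 0, ω^2; ω, 0, 0] := by
    rw [hY, pow_two]
    ext a b
    fin_cases a <;> fin_cases b <;> simp [Matrix.mul_apply, Fin.sum_univ_three] <;> grind
  have hW2 : (Xmat * Zmat ^ 2) ^ 2 = !![0, 1, 0; 0, 0, ω; ω^2, 0, 0] := by
    rw [hW, pow_two]
    ext a b
    fin_cases a <;> fin_cases b <;> simp [Matrix.mul_apply, Fin.sum_univ_three] <;> grind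
  have plus : ∀ P R : Matrix (Fin 3) (Fin 3) ℂ, P + P ^ 2 = R →
      Pplus P = ((Real.sqrt 6 : ℂ))⁻¹ • R := by
    intro P R h; rw [Pplus, h]
  have minus : ∀ P R : Matrix (Fin 3) (Fin 3) ℂ, I • (P - P ^ 2) = R →
      Pminus P = ((Real.sqrt 6 : ℂ))⁻¹ • R := by
    intro P R h; rw [Pminus, ← h, smul_smul, mul_comm]
  fin_cases i
  · refine plus _ _ ?_
    rw [hZ2, Zmat]
    ext a b
    fin_cases a <;> fin_cases b <;> simp [Qx] <;> grind
  · refine plus _ _ ?_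
    rw [hX2, Xmat]
    ext a b
    fin_cases a <;> fin_cases b <;> simp [Qx, offd]
  · refine plus _ _ ?_
    rw [hY2, hY]
    ext a b
    fin_cases a <;> fin_cases b <;> simp [Qx, offd]
  · refine plus _ _ ?_
    rw [hW2, hW]
    ext a b
    fin_cases a <;> fin_cases b <;> simp [Qx, offd]
  · refine minus _ _ ?_
    rw [hZ2, Zmat]
    ext a b
    fin_cases a <;> fin_cases b <;> simp [Qx] <;> grind
  · refine minus _ _ ?_
    rw [hX2, Xmat]
    ext a b
    fin_cases a <;> fin_cases b <;> simp [Qx, offd]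
  · refine minus _ _ ?_
    rw [hY2, hY]
    ext a b
    fin_cases a <;> fin_cases b <;> simp [Qx, offd]
  · refine minus _ _ ?_
    rw [hW2, hW]
    ext a b
    fin_cases a <;> fin_cases b <;> simp [Qx, offd]

lemma Qx_one : ∀ i j : Fin 8, (Matrix.trace (Qx i * Qx j)).re = if i = j then 6 else 0 := by
  have h3 : Real.sqrt 3 * Real.sqrt 3 = 3 := Real.mul_self_sqrt (by norm_num)
  intro i j
  fin_cases i <;> fin_cases j <;>
    simp [Qx, offd, Matrix.trace, Matrix.mul_apply, Fin.sum_univ_three, omega_sq_eq] <;>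
    (try simp [omega_eq]) <;> grind

lemma adj_eq (U : Matrix (Fin 3) (Fin 3) ℂ) (i j : Fin 8) :
    adj U i j = (1/6) * (Matrix.trace (Qx i * (U * Qx j * Uᴴ))).re := by
  have h6 : Real.sqrt 6 * Real.sqrt 6 = 6 := Real.mul_self_sqrt (by norm_num)
  have hc : ((Real.sqrt 6 : ℂ))⁻¹ * ((Real.sqrt 6 : ℂ))⁻¹ = ((1/6 : ℝ) : ℂ) := by
    rw [← mul_inv, ← Complex.ofReal_mul, h6]; norm_num
  rw [adj, Matrix.of_apply, Q_eq, Q_eq]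
  simp only [Matrix.smul_mul, Matrix.mul_smul, smul_smul, hc, Matrix.trace_smul, smul_eq_mul,
    Complex.re_ofReal_mul, Matrix.mul_assoc]

lemma adj_one : adj 1 = 1 := by
  ext i j
  rw [adj_eq]
  simp only [Matrix.one_mul, Matrix.conjTranspose_one, Matrix.mul_one, Qx_one, Matrix.one_apply]
  split_ifs <;> norm_num

lemma Qx_herm (i : Fin 8) : (Qx i)ᴴ = Qx i := by
  have hw : star ω = ω ^ 2 := by
    rw [omega_sq_eq, omega_eq]; apply Complex.ext <;> simp
  have hw2 : star (ω ^ 2) = ω := by rw [← hw, star_star]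
  simp only [Complex.star_def] at hw hw2
  ext a b
  fin_cases i <;> fin_cases a <;> fin_cases b <;>
    simp [Qx, offd, Matrix.conjTranspose_apply, hw] <;> simpa [hw] using hw2

/-- The pulled back symplectic form. -/
def symF (A B : Matrix (Fin 3) (Fin 3) ℂ) : ℝ :=
  (Matrix.trace (Qx 0 * A)).re * (Matrix.trace (Qx 4 * B)).re
  + (Matrix.trace (Qx 1 * A)).re * (Matrix.trace (Qx 5 * B)).re
  + (Matrix.trace (Qx 2 * A)).re * (Matrix.trace (Qx 6 * B)).re
  + (Matrix.trace (Qx 3 * A)).re * (Matrix.trace (Qx 7 * B)).re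
  - (Matrix.trace (Qx 4 * A)).re * (Matrix.trace (Qx 0 * B)).re
  - (Matrix.trace (Qx 5 * A)).re * (Matrix.trace (Qx 1 * B)).re
  - (Matrix.trace (Qx 6 * A)).re * (Matrix.trace (Qx 2 * B)).re
  - (Matrix.trace (Qx 7 * A)).re * (Matrix.trace (Qx 3 * B)).re

lemma symF_formula (A B : Matrix (Fin 3) (Fin 3) ℂ) (hA : Aᴴ = A) (hB : Bᴴ = B) :
    symF A B =
      (2 * (A 0 0).re - (A 1 1).re - (A 2 2).re) * (Real.sqrt 3 * ((B 2 2).re - (B 1 1).re))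
      - (2 * (B 0 0).re - (B 1 1).re - (B 2 2).re) * (Real.sqrt 3 * ((A 2 2).re - (A 1 1).re))
      + 12 * (star (A 1 0) * B 1 0 + star (A 2 1) * B 2 1 + star (A 0 2) * B 0 2).im := by
  have h3 : Real.sqrt 3 * Real.sqrt 3 = 3 := Real.mul_self_sqrt (by norm_num)
  have a1 : A 0 1 = star (A 1 0) := by rw [← Matrix.conjTranspose_apply, hA]
  have a2 : A 1 2 = star (A 2 1) := by rw [← Matrix.conjTranspose_apply, hA]
  have a3 : A 2 0 = star (A 0 2) := by rw [← Matrix.conjTranspose_apply, hA]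
  have b1 : B 0 1 = star (B 1 0) := by rw [← Matrix.conjTranspose_apply, hB]
  have b2 : B 1 2 = star (B 2 1) := by rw [← Matrix.conjTranspose_apply, hB]
  have b3 : B 2 0 = star (B 0 2) := by rw [← Matrix.conjTranspose_apply, hB]
  simp only [symF, Qx, offd, Matrix.trace, Matrix.diag_apply, Matrix.mul_apply,
    Fin.sum_univ_three, omega_sq_eq]
  simp only [omega_eq]
  simp [a1, a2, a3, b1, b2, b3]
  generalize Real.sqrt 3 = s at *
  grind

lemma symF_conj (D A B : Matrix (Fin 3) (Fin 3) ℂ) (hD : D ∈ Matrix.unitaryGroup (Fin 3) ℂ)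
    (hdiag : D.IsDiag) (hA : Aᴴ = A) (hB : Bᴴ = B) :
    symF (D * A * Dᴴ) (D * B * Dᴴ) = symF A B := by
  have hh : ∀ i, D i i * star (D i i) = 1 := by
    intro i
    have := diag_norm D hD hdiag i
    apply Complex.ext
    · simp; linarith
    · simp; ring
  have hd : ∀ (C : Matrix (Fin 3) (Fin 3) ℂ) i, D i i * C i i * star (D i i) = C i i := by
    intro C i; linear_combination C i i * hh i
  have ho : ∀ i j, star (D i i * A i j * star (D j j)) * (D i i * B i j * star (D j j))
      = star (A i j) * B i j := by
    intro i j
    simp only [star_mul', star_star]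
    linear_combination (star (A i j) * B i j) * (hh j + D j j * star (D j j) * hh i)
  rw [symF_formula _ _ (by simp [hA, Matrix.mul_assoc]) (by simp [hB, Matrix.mul_assoc]),
    symF_formula _ _ hA hB]
  simp only [conj_entry _ _ hdiag, hd, ho]

lemma form_eq (U : Matrix (Fin 3) (Fin 3) ℂ) (j k : Fin 8) :
    ((adj U)ᵀ * Ωm * adj U) j k = (1/36) * symF (U * Qx j * Uᴴ) (U * Qx k * Uᴴ) := by
  simp only [Matrix.mul_apply, Matrix.transpose_apply, adj_eq, symF, Fin.sum_univ_eight, Ωm,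
    Matrix.of_apply]
  simp
  ring

/-- For every diagonal 3×3 unitary matrix D, the adjoint
representation D̂ is symplectic: D̂ᵀ·Ω·D̂ = Ω. -/
theorem adjoint_of_diagonal_is_symplectic
    (D : Matrix (Fin 3) (Fin 3) ℂ) (hD : D ∈ Matrix.unitaryGroup (Fin 3) ℂ)
    (hdiag : D.IsDiag) :
    (adj D)ᵀ * Ωm * adj D = Ωm := by
  have h1 : (adj 1)ᵀ * Ωm * adj 1 = Ωm := by simp [adj_one]
  refine Eq.trans ?_ h1
  ext j k
  rw [form_eq, form_eq, symF_conj D _ _ hD hdiag (Qx_herm j) (Qx_herm k)]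
  simp

end
end

section
/- For every element C of the Clifford group 𝒞, every entry of the adjoint representation Ĉ lies in the set {0, 1, −1, 1/2, −1/2, √3/2, −√3/2}; the quadrants Ĉ₊₊ and Ĉ₋₋ are generalized permutation matrices (exactly one nonzero entry in each row and each column) with nonzero entries in {±1, ±1/2} and with the same nonzero pattern as each other; and the quadrants Ĉ₊₋ and Ĉ₋₊ have at most one nonzero entry per row and per column, with all nonzero entries in {±√3/2}, and share the same nonzero pattern. In particular every entry of Ĉ lies in the subring ℤ[α] of ℝ generated by 1/2 and α = sin(2π/9). -/
open Matrix Complex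

noncomputable section

/-- The four Pauli matrices Z, X, XZ, XZ². -/
def Pm : Fin 4 → Matrix (Fin 3) (Fin 3) ℂ :=
  ![Zmat, Xmat, Xmat * Zmat, Xmat * Zmat ^ 2]

lemma omega_sum : ω ^ 2 + ω + 1 = 0 := by
  have h : (ω - 1) * (ω ^ 2 + ω + 1) = 0 := by linear_combination omega_cube
  rcases mul_eq_zero.mp h with h | h
  · exact absurd (by linear_combination h) omega_ne_one
  · exact h

lemma omega_sq : ω ^ 2 = -ω - 1 := by linear_combination omega_sum

lemma unit_conj (z : ℂ) (n : ℕ) (hn : n ≠ 0) (h : z ^ n = 1) : z * (starRingEnd ℂ) z = 1 := by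
  rw [Complex.mul_conj, Complex.normSq_eq_norm_sq]
  have : ‖z‖ = 1 := Complex.norm_eq_one_of_pow_eq_one h hn
  simp [this]

lemma omega_conj : (starRingEnd ℂ) ω = ω ^ 2 := by
  have h := unit_conj ω 3 (by norm_num) omega_cube
  linear_combination ω ^ 2 * h - (starRingEnd ℂ) ω * omega_cube

lemma zeta_pow : ζ ^ 9 = 1 := by
  rw [ζ, ← Complex.exp_nat_mul]
  rw [show (9:ℕ) * (2 * Real.pi * I / 9) = 2 * Real.pi * I by push_cast; ring]
  exact Complex.exp_two_pi_mul_I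

lemma sqrt3_sq : (Real.sqrt 3 : ℂ) ^ 2 = 3 := by
  rw [← Complex.ofReal_pow, Real.sq_sqrt (by norm_num)]; norm_num

lemma sqrt6_sq : (Real.sqrt 6 : ℂ) ^ 2 = 6 := by
  rw [← Complex.ofReal_pow, Real.sq_sqrt (by norm_num)]; norm_num

lemma Pm_cube (a : Fin 4) : Pm a ^ 3 = 1 := by
  have h := omega_sq
  have h3 := omega_cube
  fin_cases a <;> ext i j <;> fin_cases i <;> fin_cases j <;>
    simp [Pm, Xmat, Zmat, pow_succ, Matrix.mul_apply, Fin.sum_univ_three] <;>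
    grind

lemma Pm_trace11 (a b : Fin 4) : trace (Pm a * Pm b) = 0 := by
  have h := omega_sq
  have h3 := omega_cube
  fin_cases a <;> fin_cases b <;>
    simp [Pm, Xmat, Zmat, pow_succ, Matrix.mul_apply, Fin.sum_univ_three, trace] <;>
    grind

lemma Pm_trace12 (a b : Fin 4) : trace (Pm a * Pm b ^ 2) = if a = b then 3 else 0 := by
  have h := omega_sq
  have h3 := omega_cube
  fin_cases a <;> fin_cases b <;>
    simp [Pm, Xmat, Zmat, pow_succ, Matrix.mul_apply, Fin.sum_univ_three, trace] <;>
    grind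

lemma Pm_trace21 (a b : Fin 4) : trace (Pm a ^ 2 * Pm b) = if a = b then 3 else 0 := by
  rw [Matrix.trace_mul_comm, Pm_trace12]; simp [eq_comm]

lemma Pm_trace22 (a b : Fin 4) : trace (Pm a ^ 2 * Pm b ^ 2) = 0 := by
  have h := omega_sq
  have h3 := omega_cube
  fin_cases a <;> fin_cases b <;>
    simp [Pm, Xmat, Zmat, pow_succ, Matrix.mul_apply, Fin.sum_univ_three, trace] <;>
    grind

lemma sqrt6_ne : (Real.sqrt 6 : ℂ) ≠ 0 := by
  intro h
  have := sqrt6_sq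
  rw [h] at this; norm_num at this

lemma tr_pp (a b : Fin 4) : trace (Pplus (Pm a) * Pplus (Pm b)) = if a = b then 1 else 0 := by
  have h6 := sqrt6_ne
  have h := sqrt6_sq
  simp only [Pplus, smul_mul_assoc, mul_smul_comm, add_mul, mul_add, trace_smul, trace_add,
    Pm_trace11, Pm_trace12, Pm_trace21, Pm_trace22, smul_eq_mul]
  split_ifs
  · field_simp; linear_combination -h
  · simp

lemma tr_pm (a b : Fin 4) : trace (Pplus (Pm a) * Pminus (Pm b)) = 0 := by
  simp only [Pplus, Pminus, smul_mul_assoc, mul_smul_comm, add_mul, mul_sub, trace_smul, trace_add,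
    trace_sub, Pm_trace11, Pm_trace12, Pm_trace21, Pm_trace22, smul_eq_mul]
  split_ifs <;> ring

lemma tr_mp (a b : Fin 4) : trace (Pminus (Pm a) * Pplus (Pm b)) = 0 := by
  rw [Matrix.trace_mul_comm, tr_pm]

lemma tr_mm (a b : Fin 4) : trace (Pminus (Pm a) * Pminus (Pm b)) = if a = b then 1 else 0 := by
  have h6 := sqrt6_ne
  have h := sqrt6_sq
  simp only [Pminus, smul_mul_assoc, mul_smul_comm, sub_mul, mul_sub, trace_smul,
    trace_sub, Pm_trace11, Pm_trace12, Pm_trace21, Pm_trace22, smul_eq_mul]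
  split_ifs
  · field_simp; linear_combination -h - 6 * Complex.I_sq
  · simp

/-- Monomial action on the Pauli matrices, together with unitarity. -/
def Good (C : GL (Fin 3) ℂ) : Prop :=
  (C : Matrix (Fin 3) (Fin 3) ℂ) * (C : Matrix (Fin 3) (Fin 3) ℂ)ᴴ = 1 ∧
  ∃ (σ : Equiv.Perm (Fin 4)) (z : Fin 4 → ℂ) (e : Fin 4 → ℕ),
    (∀ a, z a ^ 3 = 1) ∧ (∀ a, e a = 1 ∨ e a = 2) ∧
    ∀ a, (C : Matrix (Fin 3) (Fin 3) ℂ) * Pm a = z a • (Pm (σ a) ^ e a * C)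

lemma good_one : Good 1 := by
  refine ⟨by simp, 1, fun _ => 1, fun _ => 1, by simp, by simp, by simp⟩

lemma comm_pow (C A B : Matrix (Fin 3) (Fin 3) ℂ) (z : ℂ) (h : C * A = z • (B * C)) (n : ℕ) :
    C * A ^ n = z ^ n • (B ^ n * C) := by
  induction n with
  | zero => simp
  | succ n ih =>
    rw [pow_succ, ← mul_assoc, ih, smul_mul_assoc, mul_assoc, h, mul_smul_comm, smul_smul,
      ← mul_assoc, ← pow_succ, ← pow_succ]

lemma Pm_pow_four (a : Fin 4) : Pm a ^ 4 = Pm a := by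
  rw [pow_succ, Pm_cube, one_mul]

lemma good_mul (C D : GL (Fin 3) ℂ) (hC : Good C) (hD : Good D) : Good (C * D) := by
  obtain ⟨uC, σ, z, e, hz, he, h⟩ := hC
  obtain ⟨uD, τ, y, f, hy, hf, g⟩ := hD
  refine ⟨?_, τ.trans σ, fun a => y a * z (τ a) ^ f a,
    fun a => if e (τ a) = f a then 1 else 2, ?_, ?_, ?_⟩
  · rw [Units.val_mul, conjTranspose_mul, mul_assoc, ← mul_assoc (D : Matrix (Fin 3) (Fin 3) ℂ),
      uD, one_mul, uC]
  · intro a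
    simp only
    rw [mul_pow, hy, ← pow_mul, mul_comm (f a), pow_mul, hz, one_pow, one_mul]
  · intro a
    simp only
    split_ifs <;> simp
  · intro a
    have h1 := comm_pow _ _ _ _ (h (τ a)) (f a)
    rw [Units.val_mul, mul_assoc, g, mul_smul_comm, ← mul_assoc, h1, smul_mul_assoc, smul_smul,
      mul_assoc, ← pow_mul]
    have : Pm (σ (τ a)) ^ (e (τ a) * f a)
        = Pm ((τ.trans σ) a) ^ (if e (τ a) = f a then 1 else 2) := by
      rcases he (τ a) with h1 | h1 <;> rcases hf a with h2 | h2 <;>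
        simp [h1, h2, Pm_pow_four]
    rw [this]

lemma good_inv (C : GL (Fin 3) ℂ) (hC : Good C) : Good C⁻¹ := by
  obtain ⟨uC, σ, z, e, hz, he, h⟩ := hC
  have hi : ((C⁻¹ : GL (Fin 3) ℂ) : Matrix (Fin 3) (Fin 3) ℂ) * C = 1 := by
    rw [← Units.val_mul]; simp
  have hi' : (C : Matrix (Fin 3) (Fin 3) ℂ) * ((C⁻¹ : GL (Fin 3) ℂ)) = 1 := by
    rw [← Units.val_mul]; simp
  have hinv : ((C⁻¹ : GL (Fin 3) ℂ) : Matrix (Fin 3) (Fin 3) ℂ)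
      = (C : Matrix (Fin 3) (Fin 3) ℂ)ᴴ := by
    calc ((C⁻¹ : GL (Fin 3) ℂ) : Matrix (Fin 3) (Fin 3) ℂ)
        = ((C⁻¹ : GL (Fin 3) ℂ) : Matrix (Fin 3) (Fin 3) ℂ) *
          ((C : Matrix (Fin 3) (Fin 3) ℂ) * (C : Matrix (Fin 3) (Fin 3) ℂ)ᴴ) := by
          rw [uC, mul_one]
      _ = _ := by rw [← mul_assoc, hi, one_mul]
  refine ⟨?_, σ.symm, fun a => (z (σ.symm a) ^ e (σ.symm a))⁻¹, fun a => e (σ.symm a), ?_, ?_, ?_⟩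
  · rw [hinv, conjTranspose_conjTranspose, ← hinv, hi]
  · intro a
    simp only
    rw [inv_pow, ← pow_mul, mul_comm (e _), pow_mul, hz, one_pow, inv_one]
  · intro a; exact he _
  · intro b
    obtain ⟨a, rfl⟩ := σ.surjective b
    simp only [Equiv.symm_apply_apply]
    have h1 := comm_pow _ _ _ _ (h a) (e a)
    have h2 : (Pm (σ a) ^ e a) ^ e a = Pm (σ a) := by
      rw [← pow_mul]
      rcases he a with h1 | h1 <;> simp [h1, Pm_pow_four]
    rw [h2] at h1
    have hz0 : z a ^ e a ≠ 0 := by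
      apply pow_ne_zero
      intro h0
      have := hz a
      rw [h0] at this; norm_num at this
    have h3 : Pm (σ a) * (C : Matrix (Fin 3) (Fin 3) ℂ)
        = (z a ^ e a)⁻¹ • ((C : Matrix (Fin 3) (Fin 3) ℂ) * Pm a ^ e a) := by
      rw [h1, smul_smul, inv_mul_cancel₀ hz0, one_smul]
    calc ((C⁻¹ : GL (Fin 3) ℂ) : Matrix (Fin 3) (Fin 3) ℂ) * Pm (σ a)
        = ((C⁻¹ : GL (Fin 3) ℂ) : Matrix (Fin 3) (Fin 3) ℂ) *
          (Pm (σ a) * (C : Matrix (Fin 3) (Fin 3) ℂ)) * ((C⁻¹ : GL (Fin 3) ℂ)) := by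
          rw [mul_assoc, mul_assoc, hi', mul_one]
      _ = _ := by
          rw [h3, mul_smul_comm, ← mul_assoc, hi, one_mul, smul_mul_assoc]

lemma good_H : Good Hg := by
  have h := omega_sq
  have h3 := omega_cube
  have hs := sqrt3_sq
  have hs0 : (Real.sqrt 3 : ℂ) ≠ 0 := by
    intro h
    rw [h] at hs; norm_num at hs
  have hc : (Hg : Matrix (Fin 3) (Fin 3) ℂ) = Hmat := rfl
  refine ⟨?_, ⟨![1,0,3,2], ![1,0,3,2], by decide, by decide⟩, ![1,1,1,ω], ![2,1,2,1], ?_, ?_, ?_⟩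
  · rw [hc, Hmat, conjTranspose_smul, smul_mul_smul_comm]
    have e1 : (I * (Real.sqrt 3 : ℂ))⁻¹ * star (I * (Real.sqrt 3 : ℂ))⁻¹ = 3⁻¹ := by
      simp
      have := Complex.I_sq
      field_simp
      linear_combination -3 * this - hs
    rw [e1]
    ext i j
    rw [Matrix.smul_apply, Matrix.mul_apply, Fin.sum_univ_three]
    simp only [conjTranspose_apply]
    fin_cases i <;> fin_cases j <;>
      simp [omega_conj] <;> grind
  · intro a; fin_cases a <;> simp [h3]
  · intro a; fin_cases a <;> simp
  · intro a
    rw [hc, Hmat, smul_mul_assoc, mul_smul_comm, smul_comm]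
    congr 1
    fin_cases a <;> ext i j <;> fin_cases i <;> fin_cases j <;>
      simp [Pm, Xmat, Zmat, pow_succ, Matrix.mul_apply, Fin.sum_univ_three] <;>
      grind

lemma good_S : Good Sg := by
  have h := omega_sq
  have h3 := omega_cube
  have hc : (Sg : Matrix (Fin 3) (Fin 3) ℂ) = Smat := rfl
  refine ⟨?_, ⟨![0,2,3,1], ![0,3,1,2], by decide, by decide⟩, fun _ => 1, fun _ => 1,
    by simp, by simp, ?_⟩
  · rw [hc, Smat, conjTranspose_smul, smul_mul_smul_comm]
    have e1 : ζ ^ 8 * star (ζ ^ 8) = 1 := by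
      apply unit_conj _ 9 (by norm_num)
      rw [← pow_mul, mul_comm, pow_mul, zeta_pow, one_pow]
    rw [e1]
    ext i j
    rw [Matrix.smul_apply, Matrix.mul_apply, Fin.sum_univ_three]
    simp only [conjTranspose_apply]
    fin_cases i <;> fin_cases j <;>
      simp [omega_conj] <;> grind
  · intro a
    rw [hc, Smat, smul_mul_assoc, mul_smul_comm, smul_comm]
    congr 1
    fin_cases a <;> ext i j <;> fin_cases i <;> fin_cases j <;>
      simp [Pm, Xmat, Zmat, pow_succ, Matrix.mul_apply, Fin.sum_univ_three] <;>
      grind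

lemma good_cliff (C : GL (Fin 3) ℂ) (hC : C ∈ Cliff) : Good C := by
  induction hC using Subgroup.closure_induction with
  | mem x hx =>
    rcases hx with rfl | rfl
    · exact good_H
    · exact good_S
  | one => exact good_one
  | mul x y _ _ hx hy => exact good_mul x y hx hy
  | inv x _ hx => exact good_inv x hx

/-- Allowed pairs (cosine, sine) of multiples of 2π/3. -/
def CS (c s : ℝ) : Prop :=
  (c = 1 ∧ s = 0) ∨ (c = -(1/2) ∧ s = Real.sqrt 3 / 2) ∨ (c = -(1/2) ∧ s = -(Real.sqrt 3 / 2))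

lemma cube_cs (z : ℂ) (h : z ^ 3 = 1) : CS z.re z.im := by
  have h1 : (z - 1) * (z ^ 2 + z + 1) = 0 := by linear_combination h
  rcases mul_eq_zero.mp h1 with h1 | h1
  · have : z = 1 := by linear_combination h1
    left; simp [this]
  · have hs : (Real.sqrt 3 : ℂ) ^ 2 = 3 := sqrt3_sq
    have h2 : (z - (⟨-(1/2), Real.sqrt 3 / 2⟩ : ℂ)) * (z - (⟨-(1/2), -(Real.sqrt 3 / 2)⟩ : ℂ)) = 0 := by
      rw [Complex.mk_eq_add_mul_I, Complex.mk_eq_add_mul_I]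
      push_cast
      linear_combination h1 - (Real.sqrt 3 : ℂ) ^ 2 / 4 * Complex.I_sq + hs / 4
    rcases mul_eq_zero.mp h2 with h2 | h2
    · have := sub_eq_zero.mp h2
      right; left; simp [this]
    · have := sub_eq_zero.mp h2
      right; right; simp [this]

lemma cs_neg (c s : ℝ) (h : CS c s) : CS c (-s) := by
  rcases h with ⟨rfl, rfl⟩ | ⟨rfl, rfl⟩ | ⟨rfl, rfl⟩ <;> simp [CS]

/-- Conjugation on the Hermitian basis. -/
lemma conj_action (C : GL (Fin 3) ℂ) (hC : Good C) :
    ∃ (σ : Equiv.Perm (Fin 4)) (c s ε : Fin 4 → ℝ),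
      (∀ a, CS (c a) (s a)) ∧ (∀ a, ε a = 1 ∨ ε a = -1) ∧
      ∀ a, (C : Matrix (Fin 3) (Fin 3) ℂ) * Pplus (Pm a) * (C : Matrix (Fin 3) (Fin 3) ℂ)ᴴ
          = (c a : ℂ) • Pplus (Pm (σ a)) + (s a : ℂ) • Pminus (Pm (σ a)) ∧
        (C : Matrix (Fin 3) (Fin 3) ℂ) * Pminus (Pm a) * (C : Matrix (Fin 3) (Fin 3) ℂ)ᴴ
          = (ε a : ℂ) • ((c a : ℂ) • Pminus (Pm (σ a)) - (s a : ℂ) • Pplus (Pm (σ a))) := by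
  obtain ⟨uC, σ, z, e, hz, he, h⟩ := hC
  refine ⟨σ, fun a => (z a).re, fun a => if e a = 1 then (z a).im else -(z a).im,
    fun a => if e a = 1 then 1 else -1, ?_, ?_, ?_⟩
  · intro a
    have := cube_cs _ (hz a)
    simp only
    split_ifs
    · exact this
    · exact cs_neg _ _ this
  · intro a; simp only; split_ifs <;> simp
  · intro a
    have k1 : (C : Matrix (Fin 3) (Fin 3) ℂ) * Pm a * (C : Matrix (Fin 3) (Fin 3) ℂ)ᴴ
        = z a • Pm (σ a) ^ e a := by
      rw [h, smul_mul_assoc, mul_assoc, uC, mul_one]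
    have k2 : (C : Matrix (Fin 3) (Fin 3) ℂ) * Pm a ^ 2 * (C : Matrix (Fin 3) (Fin 3) ℂ)ᴴ
        = z a ^ 2 • (Pm (σ a) ^ e a) ^ 2 := by
      rw [comm_pow _ _ _ _ (h a), smul_mul_assoc, mul_assoc, uC, mul_one]
    have zc : z a ^ 2 = (starRingEnd ℂ) (z a) := by
      have h1 := unit_conj (z a) 3 (by norm_num) (hz a)
      linear_combination -z a ^ 2 * h1 + (starRingEnd ℂ) (z a) * hz a
    have r1 : z a = ((z a).re : ℂ) + ((z a).im : ℂ) * I := (Complex.re_add_im _).symm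
    have r2 : z a ^ 2 = ((z a).re : ℂ) - ((z a).im : ℂ) * I := by
      rw [zc]
      apply Complex.ext <;> simp
    have hI := Complex.I_sq
    simp only [Pplus, Pminus, mul_smul_comm, smul_mul_assoc, mul_add, add_mul, mul_sub, sub_mul,
      k1, k2]
    rw [r2]
    rcases he a with h1 | h1
    · simp only [h1, pow_one, if_true]
      constructor
      · ext i j
        simp only [Matrix.add_apply, Matrix.sub_apply, Matrix.smul_apply, smul_eq_mul]
        push_cast
        linear_combination ((Real.sqrt 6 : ℂ))⁻¹ * Pm (σ a) i j * r1
      · ext i j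
        simp only [Matrix.add_apply, Matrix.sub_apply, Matrix.smul_apply, smul_eq_mul]
        push_cast
        linear_combination I * ((Real.sqrt 6 : ℂ))⁻¹ * Pm (σ a) i j * r1 + ((Real.sqrt 6 : ℂ))⁻¹ * (z a).im * (Pm (σ a) i j + (Pm (σ a) ^ 2) i j) * hI
    · have p4 : (Pm (σ a) ^ 2) ^ 2 = Pm (σ a) := by rw [← pow_mul, Pm_pow_four]
      simp only [h1, p4]
      constructor
      · ext i j
        simp only [Matrix.add_apply, Matrix.sub_apply, Matrix.smul_apply, smul_eq_mul]
        simp only [OfNat.ofNat_ne_one, if_false]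
        push_cast
        linear_combination ((Real.sqrt 6 : ℂ))⁻¹ * (Pm (σ a) ^ 2) i j * r1
      · ext i j
        simp only [Matrix.add_apply, Matrix.sub_apply, Matrix.smul_apply, smul_eq_mul]
        simp only [OfNat.ofNat_ne_one, if_false]
        push_cast
        linear_combination I * ((Real.sqrt 6 : ℂ))⁻¹ * (Pm (σ a) ^ 2) i j * r1 + ((Real.sqrt 6 : ℂ))⁻¹ * (z a).im * (Pm (σ a) i j + (Pm (σ a) ^ 2) i j) * hI

lemma Q_lo (a : Fin 4) (h : a.val < 8) : Q ⟨a.val, h⟩ = Pplus (Pm a) := by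
  fin_cases a <;> rfl

lemma Q_hi (a : Fin 4) (h : a.val + 4 < 8) : Q ⟨a.val + 4, h⟩ = Pminus (Pm a) := by
  fin_cases a <;> rfl

lemma blocks (C : GL (Fin 3) ℂ) (hC : Good C) :
    ∃ (σ : Equiv.Perm (Fin 4)) (c s ε : Fin 4 → ℝ),
      (∀ a, CS (c a) (s a)) ∧ (∀ a, ε a = 1 ∨ ε a = -1) ∧
      (∀ i j, blockPP (adj (C : Matrix (Fin 3) (Fin 3) ℂ)) i j = if i = σ j then c j else 0) ∧
      (∀ i j, blockMP (adj (C : Matrix (Fin 3) (Fin 3) ℂ)) i j = if i = σ j then s j else 0) ∧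
      (∀ i j, blockPM (adj (C : Matrix (Fin 3) (Fin 3) ℂ)) i j
        = if i = σ j then -(ε j * s j) else 0) ∧
      (∀ i j, blockMM (adj (C : Matrix (Fin 3) (Fin 3) ℂ)) i j
        = if i = σ j then ε j * c j else 0) := by
  obtain ⟨σ, c, s, ε, h1, h2, h3⟩ := conj_action C hC
  refine ⟨σ, c, s, ε, h1, h2, ?_, ?_, ?_, ?_⟩ <;> intro i j
  · simp only [blockPP, adj, Matrix.of_apply, Q_lo]
    rw [mul_assoc, mul_assoc, ← mul_assoc (C : Matrix (Fin 3) (Fin 3) ℂ), (h3 j).1]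
    simp only [mul_add, mul_smul_comm, trace_add, trace_smul, tr_pp, tr_pm, smul_eq_mul]
    split_ifs <;> simp
  · simp only [blockMP, adj, Matrix.of_apply, Q_lo, Q_hi]
    rw [mul_assoc, mul_assoc, ← mul_assoc (C : Matrix (Fin 3) (Fin 3) ℂ), (h3 j).1]
    simp only [mul_add, mul_smul_comm, trace_add, trace_smul, tr_mp, tr_mm, smul_eq_mul]
    split_ifs <;> simp
  · simp only [blockPM, adj, Matrix.of_apply, Q_lo, Q_hi]
    rw [mul_assoc, mul_assoc, ← mul_assoc (C : Matrix (Fin 3) (Fin 3) ℂ), (h3 j).2]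
    simp only [mul_sub, mul_smul_comm, trace_sub, trace_smul, tr_pp, tr_pm, smul_eq_mul]
    split_ifs <;> simp
  · simp only [blockMM, adj, Matrix.of_apply, Q_hi]
    rw [mul_assoc, mul_assoc, ← mul_assoc (C : Matrix (Fin 3) (Fin 3) ℂ), (h3 j).2]
    simp only [mul_sub, mul_smul_comm, trace_sub, trace_smul, tr_mp, tr_mm, smul_eq_mul]
    split_ifs <;> simp

/-- Every index below 8 belongs to the first or the second half. -/
lemma fin8_cases (i : Fin 8) :
    (∃ a : Fin 4, i = ⟨a.val, by omega⟩) ∨ (∃ a : Fin 4, i = ⟨a.val + 4, by omega⟩) := by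
  by_cases h : i.val < 4
  · left; exact ⟨⟨i.val, h⟩, rfl⟩
  · right; exact ⟨⟨i.val - 4, by omega⟩, by ext; simp; omega⟩

lemma half_mem : (1/2 : ℝ) ∈ Zα := Subring.subset_closure (by simp)

lemma sqrt3_mem : Real.sqrt 3 / 2 ∈ Zα := by
  have h : Real.sqrt 3 / 2 = 3 * αR - 4 * αR ^ 3 := by
    rw [αR, ← Real.sin_three_mul, ← Real.sin_pi_div_three, ← Real.sin_pi_sub]
    congr 1; ring
  rw [h]
  have h3 : (3 : ℝ) ∈ Zα := by exact_mod_cast natCast_mem Zα 3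
  have h4 : (4 : ℝ) ∈ Zα := by exact_mod_cast natCast_mem Zα 4
  exact sub_mem (mul_mem h3 alpha_mem_Zα) (mul_mem h4 (pow_mem alpha_mem_Zα 3))

lemma value_mem (x : ℝ)
    (h : x ∈ ({0, 1, -1, 1/2, -(1/2), Real.sqrt 3 / 2, -(Real.sqrt 3 / 2)} : Set ℝ)) :
    x ∈ Zα := by
  rcases h with rfl | rfl | rfl | rfl | rfl | rfl | rfl
  · exact zero_mem _
  · exact one_mem _
  · exact neg_mem (one_mem _)
  · exact half_mem
  · exact neg_mem half_mem
  · exact sqrt3_mem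
  · exact neg_mem sqrt3_mem

/-- For every element C of the Clifford group 𝒞: every entry of Ĉ
lies in {0, ±1, ±1/2, ±√3/2}; Ĉ₊₊ and Ĉ₋₋ are generalized permutation matrices with
nonzero entries in {±1, ±1/2} and with the same nonzero pattern; Ĉ₊₋ and Ĉ₋₊ have at
most one nonzero entry per row and per column, with nonzero entries in {±√3/2}, and
share the same nonzero pattern. In particular every entry of Ĉ lies in ℤ[α]. -/
theorem adjoint_of_clifford_structure :
    ∀ C ∈ Cliff,
      (∀ i j : Fin 8, adj (C : Matrix (Fin 3) (Fin 3) ℂ) i j ∈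
        ({0, 1, -1, 1/2, -(1/2), Real.sqrt 3 / 2, -(Real.sqrt 3 / 2)} : Set ℝ)) ∧
      (∀ i : Fin 4, ∃! j : Fin 4, blockPP (adj (C : Matrix (Fin 3) (Fin 3) ℂ)) i j ≠ 0) ∧
      (∀ j : Fin 4, ∃! i : Fin 4, blockPP (adj (C : Matrix (Fin 3) (Fin 3) ℂ)) i j ≠ 0) ∧
      (∀ i : Fin 4, ∃! j : Fin 4, blockMM (adj (C : Matrix (Fin 3) (Fin 3) ℂ)) i j ≠ 0) ∧
      (∀ j : Fin 4, ∃! i : Fin 4, blockMM (adj (C : Matrix (Fin 3) (Fin 3) ℂ)) i j ≠ 0) ∧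
      (∀ i j : Fin 4, blockPP (adj (C : Matrix (Fin 3) (Fin 3) ℂ)) i j ≠ 0 →
        blockPP (adj (C : Matrix (Fin 3) (Fin 3) ℂ)) i j ∈
          ({1, -1, 1/2, -(1/2)} : Set ℝ)) ∧
      (∀ i j : Fin 4, blockMM (adj (C : Matrix (Fin 3) (Fin 3) ℂ)) i j ≠ 0 →
        blockMM (adj (C : Matrix (Fin 3) (Fin 3) ℂ)) i j ∈
          ({1, -1, 1/2, -(1/2)} : Set ℝ)) ∧
      (∀ i j : Fin 4, blockPP (adj (C : Matrix (Fin 3) (Fin 3) ℂ)) i j ≠ 0 ↔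
        blockMM (adj (C : Matrix (Fin 3) (Fin 3) ℂ)) i j ≠ 0) ∧
      (∀ i : Fin 4, ∀ j₁ j₂ : Fin 4,
        blockPM (adj (C : Matrix (Fin 3) (Fin 3) ℂ)) i j₁ ≠ 0 →
        blockPM (adj (C : Matrix (Fin 3) (Fin 3) ℂ)) i j₂ ≠ 0 → j₁ = j₂) ∧
      (∀ j : Fin 4, ∀ i₁ i₂ : Fin 4,
        blockPM (adj (C : Matrix (Fin 3) (Fin 3) ℂ)) i₁ j ≠ 0 →
        blockPM (adj (C : Matrix (Fin 3) (Fin 3) ℂ)) i₂ j ≠ 0 → i₁ = i₂) ∧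
      (∀ i : Fin 4, ∀ j₁ j₂ : Fin 4,
        blockMP (adj (C : Matrix (Fin 3) (Fin 3) ℂ)) i j₁ ≠ 0 →
        blockMP (adj (C : Matrix (Fin 3) (Fin 3) ℂ)) i j₂ ≠ 0 → j₁ = j₂) ∧
      (∀ j : Fin 4, ∀ i₁ i₂ : Fin 4,
        blockMP (adj (C : Matrix (Fin 3) (Fin 3) ℂ)) i₁ j ≠ 0 →
        blockMP (adj (C : Matrix (Fin 3) (Fin 3) ℂ)) i₂ j ≠ 0 → i₁ = i₂) ∧
      (∀ i j : Fin 4, blockPM (adj (C : Matrix (Fin 3) (Fin 3) ℂ)) i j ≠ 0 →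
        blockPM (adj (C : Matrix (Fin 3) (Fin 3) ℂ)) i j ∈
          ({Real.sqrt 3 / 2, -(Real.sqrt 3 / 2)} : Set ℝ)) ∧
      (∀ i j : Fin 4, blockMP (adj (C : Matrix (Fin 3) (Fin 3) ℂ)) i j ≠ 0 →
        blockMP (adj (C : Matrix (Fin 3) (Fin 3) ℂ)) i j ∈
          ({Real.sqrt 3 / 2, -(Real.sqrt 3 / 2)} : Set ℝ)) ∧
      (∀ i j : Fin 4, blockPM (adj (C : Matrix (Fin 3) (Fin 3) ℂ)) i j ≠ 0 ↔
        blockMP (adj (C : Matrix (Fin 3) (Fin 3) ℂ)) i j ≠ 0) ∧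
      (∀ i j : Fin 8, adj (C : Matrix (Fin 3) (Fin 3) ℂ) i j ∈ Zα) := by
  intro C hC
  obtain ⟨σ, c, s, ε, hcs, hε, hPP, hMP, hPM, hMM⟩ := blocks C (good_cliff C hC)
  have c0 : ∀ j, c j ≠ 0 := by
    intro j
    rcases hcs j with ⟨h, _⟩ | ⟨h, _⟩ | ⟨h, _⟩ <;> rw [h] <;> norm_num
  have ε0 : ∀ j, ε j ≠ 0 := by
    intro j
    rcases hε j with h | h <;> rw [h] <;> norm_num
  have all : ∀ i j : Fin 8, adj (C : Matrix (Fin 3) (Fin 3) ℂ) i j ∈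
        ({0, 1, -1, 1/2, -(1/2), Real.sqrt 3 / 2, -(Real.sqrt 3 / 2)} : Set ℝ) := by
    intro i j
    rcases fin8_cases i with ⟨a, rfl⟩ | ⟨a, rfl⟩ <;>
      rcases fin8_cases j with ⟨b, rfl⟩ | ⟨b, rfl⟩
    · change blockPP (adj (C : Matrix (Fin 3) (Fin 3) ℂ)) a b ∈ _
      rw [hPP]
      split_ifs
      · rcases hcs b with ⟨h, _⟩ | ⟨h, _⟩ | ⟨h, _⟩ <;> rw [h] <;> simp
      · simp
    · change blockPM (adj (C : Matrix (Fin 3) (Fin 3) ℂ)) a b ∈ _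
      rw [hPM]
      split_ifs
      · rcases hcs b with ⟨_, h⟩ | ⟨_, h⟩ | ⟨_, h⟩ <;> rw [h] <;>
          rcases hε b with h | h <;> rw [h] <;> simp
      · simp
    · change blockMP (adj (C : Matrix (Fin 3) (Fin 3) ℂ)) a b ∈ _
      rw [hMP]
      split_ifs
      · rcases hcs b with ⟨_, h⟩ | ⟨_, h⟩ | ⟨_, h⟩ <;> rw [h] <;> simp
      · simp
    · change blockMM (adj (C : Matrix (Fin 3) (Fin 3) ℂ)) a b ∈ _
      rw [hMM]
      split_ifs
      · rcases hcs b with ⟨h, _⟩ | ⟨h, _⟩ | ⟨h, _⟩ <;> rw [h] <;>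
          rcases hε b with h | h <;> rw [h] <;> simp
      · simp
  have nPP : ∀ i j, blockPP (adj (C : Matrix (Fin 3) (Fin 3) ℂ)) i j ≠ 0 ↔ i = σ j := by
    intro i j; rw [hPP]; simp [c0]
  have nMM : ∀ i j, blockMM (adj (C : Matrix (Fin 3) (Fin 3) ℂ)) i j ≠ 0 ↔ i = σ j := by
    intro i j; rw [hMM]; simp [c0, ε0]
  have nPM : ∀ i j, blockPM (adj (C : Matrix (Fin 3) (Fin 3) ℂ)) i j ≠ 0 ↔
      i = σ j ∧ s j ≠ 0 := by
    intro i j; rw [hPM]; simp [ε0]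
  have nMP : ∀ i j, blockMP (adj (C : Matrix (Fin 3) (Fin 3) ℂ)) i j ≠ 0 ↔
      i = σ j ∧ s j ≠ 0 := by
    intro i j; rw [hMP]; simp
  refine ⟨all, ?_, ?_, ?_, ?_, ?_, ?_, ?_, ?_, ?_, ?_, ?_, ?_, ?_, ?_,
    fun i j => value_mem _ (all i j)⟩
  · intro i
    refine ⟨σ.symm i, (nPP _ _).2 (by simp), fun j hj => ?_⟩
    rw [(nPP _ _).1 hj, Equiv.symm_apply_apply]
  · intro j
    exact ⟨σ j, (nPP _ _).2 rfl, fun i hi => (nPP _ _).1 hi⟩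
  · intro i
    refine ⟨σ.symm i, (nMM _ _).2 (by simp), fun j hj => ?_⟩
    rw [(nMM _ _).1 hj, Equiv.symm_apply_apply]
  · intro j
    exact ⟨σ j, (nMM _ _).2 rfl, fun i hi => (nMM _ _).1 hi⟩
  · intro i j h
    rw [hPP, if_pos ((nPP _ _).1 h)]
    rcases hcs j with ⟨h, _⟩ | ⟨h, _⟩ | ⟨h, _⟩ <;> rw [h] <;> simp
  · intro i j h
    rw [hMM, if_pos ((nMM _ _).1 h)]
    rcases hcs j with ⟨h, _⟩ | ⟨h, _⟩ | ⟨h, _⟩ <;> rw [h] <;>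
      rcases hε j with h | h <;> rw [h] <;> simp
  · intro i j; rw [nPP, nMM]
  · intro i j₁ j₂ h1 h2
    exact σ.injective (((nPM _ _).1 h1).1.symm.trans ((nPM _ _).1 h2).1)
  · intro j i₁ i₂ h1 h2
    exact ((nPM _ _).1 h1).1.trans ((nPM _ _).1 h2).1.symm
  · intro i j₁ j₂ h1 h2
    exact σ.injective (((nMP _ _).1 h1).1.symm.trans ((nMP _ _).1 h2).1)
  · intro j i₁ i₂ h1 h2
    exact ((nMP _ _).1 h1).1.trans ((nMP _ _).1 h2).1.symm
  · intro i j h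
    obtain ⟨h1, h2⟩ := (nPM _ _).1 h
    rw [hPM, if_pos h1]
    rcases hcs j with ⟨_, h⟩ | ⟨_, h⟩ | ⟨_, h⟩
    · exact absurd h h2
    all_goals rw [h]; rcases hε j with h | h <;> rw [h] <;> simp
  · intro i j h
    obtain ⟨h1, h2⟩ := (nMP _ _).1 h
    rw [hMP, if_pos h1]
    rcases hcs j with ⟨_, h⟩ | ⟨_, h⟩ | ⟨_, h⟩
    · exact absurd h h2
    all_goals rw [h]; simp
  · intro i j; rw [nPM, nMP]

end
end
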